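/- arXiv:2302.14099 — 6 statements merged into one kernel-verified Lean document; each statement's English description precedes it below -/
import Mathlib

section
/- Let μ_0, μ_1, …, μ_g be probability measures on a common measurable space, let ε ≥ 0 and δ ≥ 0, and suppose that for every 1 ≤ ℓ ≤ g we have μ_{ℓ-1} ≈_{(ε,δ)} μ_ℓ. Then μ_0 ≈_{(gε, g·e^{gε}·δ)} μ_g; that is, for every measurable set F, μ_0(F) ≤ e^{gε}·μ_g(F) + g·e^{gε}·δ and μ_g(F) ≤ e^{gε}·μ_0(F) + g·e^{gε}·δ. (This is the hybrid-argument core of the paper's group-privacy theorem for challenge differential privacy.) -/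
open MeasureTheory

/-- `μ ≈_{(ε,δ)} ν`: for every measurable set `F`,
`μ F ≤ e^ε · ν F + δ` and `ν F ≤ e^ε · μ F + δ`. -/
def ApproxIndist {Ω : Type*} [MeasurableSpace Ω] (ε δ : ℝ) (μ ν : Measure Ω) : Prop :=
  ∀ F : Set Ω, MeasurableSet F →
    μ F ≤ ENNReal.ofReal (Real.exp ε) * ν F + ENNReal.ofReal δ ∧
    ν F ≤ ENNReal.ofReal (Real.exp ε) * μ F + ENNReal.ofReal δ

/-!
Appending one step to a chain of `n` scales the new error by `e^(nε)` in the forward direction, and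
the accumulated error by `e^ε` in the backward direction. Either recursion yields the geometric
error `(1 + e^ε + ⋯ + e^((g-1)ε)) · δ` after `g` steps, and for `ε ≥ 0` each of its `g` terms is at
most `e^(gε) · δ`.
-/

theorem geom_sum_le_mul_pow {R : Type*} [Semiring R] [PartialOrder R] [IsOrderedRing R]
    {x : R} (hx : 1 ≤ x) (n : ℕ) : ∑ i ∈ Finset.range n, x ^ i ≤ n * x ^ n := by
  simpa only [Finset.card_range, nsmul_eq_mul] using
    Finset.sum_le_card_nsmul (Finset.range n) (x ^ ·) (x ^ n)
      fun _ hi => pow_le_pow_right₀ hx (Finset.mem_range.1 hi).le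

theorem le_ofReal_exp_mul_add_trans {x y z : ENNReal} {ε₁ ε₂ δ₁ δ₂ : ℝ}
    (hδ₁ : 0 ≤ δ₁) (hδ₂ : 0 ≤ δ₂)
    (hxy : x ≤ ENNReal.ofReal (Real.exp ε₁) * y + ENNReal.ofReal δ₁)
    (hyz : y ≤ ENNReal.ofReal (Real.exp ε₂) * z + ENNReal.ofReal δ₂) :
    x ≤ ENNReal.ofReal (Real.exp (ε₁ + ε₂)) * z + ENNReal.ofReal (Real.exp ε₁ * δ₂ + δ₁) :=
  calc
    x ≤ ENNReal.ofReal (Real.exp ε₁) *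
          (ENNReal.ofReal (Real.exp ε₂) * z + ENNReal.ofReal δ₂) + ENNReal.ofReal δ₁ :=
      hxy.trans (by gcongr)
    _ = ENNReal.ofReal (Real.exp (ε₁ + ε₂)) * z + ENNReal.ofReal (Real.exp ε₁ * δ₂ + δ₁) := by
      rw [Real.exp_add, ENNReal.ofReal_mul (Real.exp_nonneg _),
        ENNReal.ofReal_add (by positivity) hδ₁, ENNReal.ofReal_mul (Real.exp_nonneg _)]
      ring

namespace ApproxIndist

variable {Ω : Type*} [MeasurableSpace Ω] {μ ν ρ : Measure Ω} {ε ε' ε₁ ε₂ δ δ' δ₁ δ₂ : ℝ}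

theorem refl (μ : Measure Ω) : ApproxIndist 0 0 μ μ := fun F _ => by simp

theorem mono (h : ApproxIndist ε δ μ ν) (hε : ε ≤ ε') (hδ : δ ≤ δ') :
    ApproxIndist ε' δ' μ ν := fun F hF =>
  ⟨(h F hF).1.trans (by gcongr), (h F hF).2.trans (by gcongr)⟩

theorem trans (hμν : ApproxIndist ε₁ δ₁ μ ν) (hνρ : ApproxIndist ε₂ δ₂ ν ρ)
    (hδ₁ : 0 ≤ δ₁) (hδ₂ : 0 ≤ δ₂) :
    ApproxIndist (ε₁ + ε₂) (max (Real.exp ε₁ * δ₂ + δ₁) (Real.exp ε₂ * δ₁ + δ₂)) μ ρ := by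
  intro F hF
  have forward := le_ofReal_exp_mul_add_trans hδ₁ hδ₂ (hμν F hF).1 (hνρ F hF).1
  have backward := le_ofReal_exp_mul_add_trans hδ₂ hδ₁ (hνρ F hF).2 (hμν F hF).2
  rw [add_comm ε₂ ε₁] at backward
  exact ⟨forward.trans (by gcongr; exact le_max_left _ _),
    backward.trans (by gcongr; exact le_max_right _ _)⟩

end ApproxIndist

theorem group_privacy_chain_general {Ω : Type*} [MeasurableSpace Ω] (g : ℕ) (μ : ℕ → Measure Ω)
    (ε δ : ℝ) (hδ : 0 ≤ δ) (h : ∀ ℓ < g, ApproxIndist ε δ (μ ℓ) (μ (ℓ + 1))) :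
    ApproxIndist (g * ε) ((∑ i ∈ Finset.range g, Real.exp ε ^ i) * δ) (μ 0) (μ g) := by
  induction g with
  | zero => simpa using ApproxIndist.refl (μ 0)
  | succ n ih =>
    have hprefix := ih fun ℓ hℓ => h ℓ (hℓ.trans n.lt_succ_self)
    have hlast := h n n.lt_succ_self
    have forward_error :
        Real.exp (n * ε) * δ + (∑ i ∈ Finset.range n, Real.exp ε ^ i) * δ =
          (∑ i ∈ Finset.range (n + 1), Real.exp ε ^ i) * δ := by
      rw [geom_sum_succ', Real.exp_nat_mul, add_mul]
    have backward_error :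
        Real.exp ε * ((∑ i ∈ Finset.range n, Real.exp ε ^ i) * δ) + δ =
          (∑ i ∈ Finset.range (n + 1), Real.exp ε ^ i) * δ := by
      rw [geom_sum_succ, add_mul, one_mul, mul_assoc]
    have hchain := hprefix.trans hlast (by positivity) hδ
    rwa [forward_error, backward_error, max_self, ← add_one_mul, ← Nat.cast_succ] at hchain

/-- Hybrid-argument core of group privacy: chaining `g` many `(ε,δ)`-indistinguishable
steps gives `(gε, g·e^{gε}·δ)`-indistinguishability between the endpoints. -/
theorem group_privacy_chain {Ω : Type*} [MeasurableSpace Ω] (g : ℕ) (μ : ℕ → Measure Ω)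
    (hprob : ∀ ℓ, ℓ ≤ g → IsProbabilityMeasure (μ ℓ))
    (ε δ : ℝ) (hε : 0 ≤ ε) (hδ : 0 ≤ δ)
    (h : ∀ ℓ, 1 ≤ ℓ → ℓ ≤ g → ApproxIndist ε δ (μ (ℓ - 1)) (μ ℓ)) :
    ApproxIndist (g * ε) (g * Real.exp (g * ε) * δ) (μ 0) (μ g) := by
  have hchain := group_privacy_chain_general g μ ε δ hδ fun ℓ hℓ => h (ℓ + 1) ℓ.succ_pos hℓ
  rw [Real.exp_nat_mul]
  exact hchain.mono le_rfl (by gcongr; exact geom_sum_le_mul_pow (Real.one_le_exp hε) g)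
end

section
/- Let μ and ν be probability measures on a measurable space Ω, let ε, δ ≥ 0 with μ ≈_{(ε,δ)} ν, and let κ be a Markov kernel from Ω to a measurable space Ω'. Then the post-processed measures satisfy μ.bind κ ≈_{(ε,δ)} ν.bind κ; that is, (ε,δ)-indistinguishability is closed under (possibly randomized) post-processing. -/
open MeasureTheory ProbabilityTheory

/-!
Applied to the superlevel sets of a function `0 ≤ f ≤ M`, a bound `μ F ≤ ρ F + d` integrates to
`∫ f dμ ≤ ∫ f dρ + M d` by the layer cake formula, since only the levels in `(0, M)` contribute.
Post-processing is the case `f = κ(·)(G)`, `ρ = e^ε ν`, `M = 1`.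
-/

open scoped ENNReal NNReal

section

variable {Ω Ω' : Type*} [MeasurableSpace Ω] [MeasurableSpace Ω'] {μ ν : Measure Ω}

theorem lintegral_eq_lintegral_measure_lt_toReal (μ : Measure Ω) {f : Ω → ℝ≥0∞}
    (hf : AEMeasurable f μ) (hf_top : ∀ᵐ x ∂μ, f x ≠ ∞) :
    ∫⁻ x, f x ∂μ = ∫⁻ t in Set.Ioi (0 : ℝ), μ {x | t < (f x).toReal} := by
  rw [← lintegral_eq_lintegral_meas_lt μ (.of_forall fun _ => ENNReal.toReal_nonneg)
    hf.ennreal_toReal]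
  exact lintegral_congr_ae <| hf_top.mono fun _ hx => (ENNReal.ofReal_toReal hx).symm

theorem lintegral_le_lintegral_add_of_measure_le_add {ρ : Measure Ω} {d : ℝ≥0∞}
    (h : ∀ F, MeasurableSet F → μ F ≤ ρ F + d)
    {f : Ω → ℝ≥0∞} (hf : Measurable f) {M : ℝ≥0} (hfM : ∀ x, f x ≤ M) :
    ∫⁻ x, f x ∂μ ≤ ∫⁻ x, f x ∂ρ + M * d := by
  have f_ne_top (x : Ω) : f x ≠ ∞ := ne_top_of_le_ne_top ENNReal.coe_ne_top (hfM x)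
  have superlevel_le (t : ℝ) :
      μ {x | t < (f x).toReal} ≤
        ρ {x | t < (f x).toReal} + (Set.Iio (M : ℝ)).indicator (fun _ => d) t := by
    by_cases ht : t < M
    · rw [Set.indicator_of_mem (Set.mem_Iio.2 ht)]
      exact h _ (measurableSet_lt measurable_const hf.ennreal_toReal)
    · have superlevel_empty : {x | t < (f x).toReal} = ∅ :=
        Set.eq_empty_of_forall_notMem fun x hx =>
          ht (hx.trans_le (ENNReal.toReal_mono ENNReal.coe_ne_top (hfM x)))
      simp [superlevel_empty]
  calc ∫⁻ x, f x ∂μ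
      = ∫⁻ t in Set.Ioi (0 : ℝ), μ {x | t < (f x).toReal} :=
        lintegral_eq_lintegral_measure_lt_toReal μ hf.aemeasurable (.of_forall f_ne_top)
    _ ≤ ∫⁻ t in Set.Ioi (0 : ℝ),
          (ρ {x | t < (f x).toReal} + (Set.Iio (M : ℝ)).indicator (fun _ => d) t) :=
        lintegral_mono superlevel_le
    _ = (∫⁻ t in Set.Ioi (0 : ℝ), ρ {x | t < (f x).toReal}) +
          ∫⁻ t in Set.Ioi (0 : ℝ), (Set.Iio (M : ℝ)).indicator (fun _ => d) t :=
        lintegral_add_right _ (measurable_const.indicator measurableSet_Iio)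
    _ = ∫⁻ x, f x ∂ρ + M * d := by
        rw [← lintegral_eq_lintegral_measure_lt_toReal ρ hf.aemeasurable (.of_forall f_ne_top),
          lintegral_indicator_const measurableSet_Iio,
          Measure.restrict_apply measurableSet_Iio, Set.Iio_inter_Ioi, Real.volume_Ioo, sub_zero,
          ENNReal.ofReal_coe_nnreal, mul_comm d]

theorem bind_apply_le_mul_add {c d : ℝ≥0∞} (h : ∀ F, MeasurableSet F → μ F ≤ c * ν F + d)
    {κ : Kernel Ω Ω'} {M : ℝ≥0} (hκ : ∀ ω, κ ω Set.univ ≤ M)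
    {G : Set Ω'} (hG : MeasurableSet G) :
    μ.bind κ G ≤ c * ν.bind κ G + M * d := by
  rw [Measure.bind_apply hG κ.aemeasurable, Measure.bind_apply hG κ.aemeasurable,
    ← smul_eq_mul c, ← lintegral_smul_measure]
  exact lintegral_le_lintegral_add_of_measure_le_add (ρ := c • ν) h (κ.measurable_coe hG)
    fun ω => (measure_mono (Set.subset_univ G)).trans (hκ ω)

theorem approxIndist_postprocess_general {ε : ℝ} {δ : ℝ≥0} (h : ApproxIndist ε δ μ ν)
    {κ : Kernel Ω Ω'} {M : ℝ≥0} (hκ : ∀ ω, κ ω Set.univ ≤ M) :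
    ApproxIndist ε (M * δ) (μ.bind κ) (ν.bind κ) := by
  intro G hG
  rw [ENNReal.ofReal_mul M.coe_nonneg, ENNReal.ofReal_coe_nnreal]
  exact ⟨bind_apply_le_mul_add (fun F hF => (h F hF).1) hκ hG,
    bind_apply_le_mul_add (fun F hF => (h F hF).2) hκ hG⟩

end

/-- `(ε,δ)`-indistinguishability is closed under (possibly randomized) post-processing
by a Markov kernel. -/
theorem approxIndist_postprocess {Ω Ω' : Type*} [MeasurableSpace Ω] [MeasurableSpace Ω']
    (μ ν : Measure Ω) [IsProbabilityMeasure μ] [IsProbabilityMeasure ν]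
    (ε δ : ℝ) (hε : 0 ≤ ε) (hδ : 0 ≤ δ)
    (h : ApproxIndist ε δ μ ν)
    (κ : Kernel Ω Ω') [IsMarkovKernel κ] :
    ApproxIndist ε δ (μ.bind κ) (ν.bind κ) := by
  lift δ to ℝ≥0 using hδ
  simpa using approxIndist_postprocess_general h (κ := κ) (M := 1) fun _ => prob_le_one
end

section
/- (The Laplace mechanism is ε-differentially private.) Let X be a type, Δ > 0, and let f be a real-valued function on finite multisets over X with sensitivity Δ, i.e., |f(S ∪ {x}) − f(S)| ≤ Δ for every multiset S and every x ∈ X. Let ε > 0 and let L be a random variable with distribution Lap(Δ/ε). Then for every pair of neighboring multisets S, S' (one obtained from the other by adding one element) and every measurable set F ⊆ ℝ, Pr[f(S) + L ∈ F] ≤ e^ε · Pr[f(S') + L ∈ F]. Equivalently, the pushforward of Lap(Δ/ε) under translation by f(S) and the pushforward under translation by f(S') are (ε,0)-indistinguishable. -/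
open MeasureTheory

/-- The Laplace distribution `Lap(γ)` on `ℝ`, with density `x ↦ (1/(2γ))·exp(−|x|/γ)`
with respect to Lebesgue measure. -/
noncomputable def lap (γ : ℝ) : Measure ℝ :=
  volume.withDensity fun x => ENNReal.ofReal ((1 / (2 * γ)) * Real.exp (-|x| / γ))

/-- Two multisets are neighboring if one is obtained from the other by adding one element. -/
def Neighboring {X : Type*} (S S' : Multiset X) : Prop :=
  ∃ x : X, S' = x ::ₘ S ∨ S = x ::ₘ S'

/-!
By the triangle inequality, translating the density of `Lap(γ)` from `b` to `a` changes it pointwise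
by a factor of at most `e^(|a - b|/γ)`. Integrating compares the translated measures, and for
`γ = Δ/ε` and `|a - b| ≤ Δ` the factor is at most `e^ε`.
-/

theorem map_withDensity_of_measurePreserving {α β : Type*} [MeasurableSpace α] [MeasurableSpace β]
    {μ : Measure α} {ν : Measure β} (e : α ≃ᵐ β) (he : MeasurePreserving e μ ν) (p : α → ENNReal) :
    (μ.withDensity p).map e = ν.withDensity (p ∘ e.symm) := by
  ext F hF
  rw [e.map_apply, withDensity_apply _ (e.measurable hF), withDensity_apply _ hF,
    ← he.setLIntegral_comp_preimage_emb e.measurableEmbedding]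
  simp only [Function.comp_apply, e.symm_apply_apply]

theorem exp_neg_dist_div_le {α : Type*} [PseudoMetricSpace α] {γ : ℝ} (hγ : 0 ≤ γ) (x a b : α) :
    Real.exp (-dist x a / γ) ≤ Real.exp (dist a b / γ) * Real.exp (-dist x b / γ) := by
  rw [← Real.exp_add, ← add_div]
  gcongr
  linarith [dist_triangle x a b]

theorem map_const_add_lap (γ a : ℝ) :
    (lap γ).map (a + ·) =
      volume.withDensity fun x => ENNReal.ofReal ((1 / (2 * γ)) * Real.exp (-dist x a / γ)) := by
  have h := map_withDensity_of_measurePreserving (MeasurableEquiv.addLeft a)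
    (measurePreserving_add_left volume a)
    fun x => ENNReal.ofReal ((1 / (2 * γ)) * Real.exp (-|x| / γ))
  simpa only [lap, Function.comp_def, MeasurableEquiv.coe_addLeft, MeasurableEquiv.symm_addLeft,
    neg_add_eq_sub, Real.dist_eq] using h

theorem map_const_add_lap_le {γ : ℝ} (hγ : 0 < γ) (a b : ℝ) :
    (lap γ).map (a + ·) ≤ ENNReal.ofReal (Real.exp (dist a b / γ)) • (lap γ).map (b + ·) := by
  rw [map_const_add_lap, map_const_add_lap, ← withDensity_smul' _ _ ENNReal.ofReal_ne_top]
  refine withDensity_mono (ae_of_all _ fun x => ?_)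
  simp only [Pi.smul_apply, smul_eq_mul]
  rw [← ENNReal.ofReal_mul (Real.exp_nonneg _), mul_left_comm]
  gcongr
  exact exp_neg_dist_div_le hγ.le x a b

theorem Neighboring.abs_sub_le {X : Type*} {Δ : ℝ} {f : Multiset X → ℝ}
    (hsens : ∀ (S : Multiset X) (x : X), |f (x ::ₘ S) - f S| ≤ Δ)
    {S S' : Multiset X} (h : Neighboring S S') : |f S - f S'| ≤ Δ := by
  obtain ⟨x, rfl | rfl⟩ := h
  · rw [abs_sub_comm]
    exact hsens S x
  · exact hsens S' x

theorem laplace_mechanism_dp_general {Δ ε a b : ℝ} (hΔ : 0 < Δ) (hε : 0 < ε)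
    (hab : |a - b| ≤ Δ) (F : Set ℝ) :
    lap (Δ / ε) {z : ℝ | a + z ∈ F} ≤
      ENNReal.ofReal (Real.exp ε) * lap (Δ / ε) {z : ℝ | b + z ∈ F} := by
  have map_apply (c : ℝ) : (lap (Δ / ε)).map (c + ·) F = lap (Δ / ε) {z : ℝ | c + z ∈ F} :=
    (MeasurableEquiv.addLeft c).map_apply F
  have exponent_le : dist a b / (Δ / ε) ≤ ε := by
    rw [div_le_iff₀ (div_pos hΔ hε), mul_div_cancel₀ _ hε.ne']
    exact hab
  calc lap (Δ / ε) {z : ℝ | a + z ∈ F}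
      ≤ ENNReal.ofReal (Real.exp (dist a b / (Δ / ε))) * lap (Δ / ε) {z : ℝ | b + z ∈ F} := by
        simpa only [Measure.smul_apply, smul_eq_mul, map_apply] using
          map_const_add_lap_le (div_pos hΔ hε) a b F
    _ ≤ ENNReal.ofReal (Real.exp ε) * lap (Δ / ε) {z : ℝ | b + z ∈ F} := by gcongr

/-- The Laplace mechanism is `ε`-differentially private: if `f` has sensitivity `Δ` and
`L ∼ Lap(Δ/ε)`, then for neighboring multisets `S, S'` and every measurable `F ⊆ ℝ`,
`Pr[f(S) + L ∈ F] ≤ e^ε · Pr[f(S') + L ∈ F]`. -/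
theorem laplace_mechanism_dp {X : Type*} (Δ ε : ℝ) (hΔ : 0 < Δ) (hε : 0 < ε)
    (f : Multiset X → ℝ)
    (hsens : ∀ (S : Multiset X) (x : X), |f (x ::ₘ S) - f S| ≤ Δ)
    (S S' : Multiset X) (hneighbor : Neighboring S S')
    (F : Set ℝ) (hF : MeasurableSet F) :
    lap (Δ / ε) {z : ℝ | f S + z ∈ F} ≤
      ENNReal.ofReal (Real.exp ε) * lap (Δ / ε) {z : ℝ | f S' + z ∈ F} :=
  laplace_mechanism_dp_general hΔ hε (hneighbor.abs_sub_le hsens) F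
end

section
/- (Adaptive coin-flipping game tail bound.) Let (Ω, 𝓕, ℙ) be a probability space with a filtration (𝓕_i)_{0 ≤ i ≤ m}, let k ≥ 0 be an integer, and for each 1 ≤ i ≤ m let p_i and q_i be 𝓕_{i−1}-measurable random variables with 0 ≤ p_i ≤ 5/6 and p_i/5 ≤ q_i ≤ 1 − p_i almost surely, and let X_i be an 𝓕_i-measurable random variable with values in {0,1,2} such that almost surely ℙ[X_i = 1 ∣ 𝓕_{i−1}] = p_i and ℙ[X_i = 2 ∣ 𝓕_{i−1}] = q_i. Define processes budget_0 = k, reward_0 = 0 and, for 1 ≤ i ≤ m: if X_i = 1 and budget_{i−1} > 0 then reward_i = reward_{i−1} + 1 and budget_i = budget_{i−1}; else if X_i = 2 then budget_i = budget_{i−1} − 1 and reward_i = reward_{i−1}; else both stay unchanged. Then for every λ ∈ ℝ, ℙ[reward_m > λ] ≤ exp(−λ/6 + 3(k+1)). -/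
open MeasureTheory

/-! Give a game state with reward `r` and budget `n` the weight `exp (a * r + b * max n 0)`. While
the budget is positive, a reward multiplies the weight by `exp a` and a loss multiplies it by
`exp (-b)`; afterwards the weight is frozen. If losses are at least `c` times as likely as rewards
and `exp a - 1 ≤ c * (1 - exp (-b))`, the expected weight therefore never exceeds its initial value
`exp (b * k)`, which bounds the moment generating function of the reward at `a`, and Chernoff's
bound applies. The theorem is the case `a = 1 / 6`, `b = 3`, `c = 1 / 5`. -/

open ProbabilityTheory Real

section ConditionalProbability

variable {Ω : Type*} {m m0 : MeasurableSpace Ω} {μ : Measure Ω} {f : Ω → ℝ} {s t : Set Ω} {c : ℝ}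

lemma condExp_indicator_of_stronglyMeasurable [IsFiniteMeasure μ] (hf : StronglyMeasurable[m] f)
    (hf_int : Integrable f μ) (hs : MeasurableSet[m0] s) :
    μ[s.indicator f | m] =ᵐ[μ] f * μ⟦s | m⟧ := by
  have h_mul : s.indicator f = f * s.indicator fun _ => (1 : ℝ) := by
    simp only [← Set.indicator_mul_right, Pi.mul_def, mul_one]
  rw [h_mul]
  exact condExp_mul_of_stronglyMeasurable_left hf (h_mul ▸ hf_int.indicator hs)
    ((integrable_const 1).indicator hs)

lemma mul_setIntegral_le_of_condProb_le [IsFiniteMeasure μ] (hm : m ≤ m0)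
    (hf : StronglyMeasurable[m] f) (hf_int : Integrable f μ) (hf_nonneg : 0 ≤ᵐ[μ] f)
    (hs : MeasurableSet[m0] s) (ht : MeasurableSet[m0] t)
    (hst : ∀ᵐ ω ∂μ, c * (μ⟦s | m⟧) ω ≤ (μ⟦t | m⟧) ω) :
    c * ∫ ω in s, f ω ∂μ ≤ ∫ ω in t, f ω ∂μ := by
  rw [← integral_indicator hs, ← integral_indicator ht, ← integral_condExp hm,
    ← integral_condExp (f := t.indicator f) hm, ← integral_const_mul]
  refine integral_mono_ae (integrable_condExp.const_mul c) integrable_condExp ?_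
  filter_upwards [condExp_indicator_of_stronglyMeasurable hf hf_int hs,
    condExp_indicator_of_stronglyMeasurable hf hf_int ht, hf_nonneg, hst] with ω hs_eq ht_eq h0 hle
  simp only [hs_eq, ht_eq, Pi.mul_apply]
  rw [mul_left_comm]
  exact mul_le_mul_of_nonneg_left hle h0

end ConditionalProbability

section CoinPotential

variable {a b : ℝ} {r n : ℤ}

/-- The exponential potential of a game state with reward `r` and budget `n`; a negative budget
counts as `0`, so that losses beyond the last unit leave the potential unchanged. -/
noncomputable def coinPotential (a b : ℝ) (r n : ℤ) : ℝ := exp (a * r + b * n.toNat)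

lemma coinPotential_pos : 0 < coinPotential a b r n := exp_pos _

lemma coinPotential_add_one : coinPotential a b (r + 1) n = exp a * coinPotential a b r n := by
  rw [coinPotential, coinPotential, ← exp_add]
  push_cast
  ring_nf

lemma coinPotential_sub_one_of_pos (hn : 0 < n) :
    coinPotential a b r (n - 1) = exp (-b) * coinPotential a b r n := by
  have h_toNat : n.toNat = (n - 1).toNat + 1 := by lia
  rw [coinPotential, coinPotential, ← exp_add, h_toNat]
  push_cast
  ring_nf

lemma coinPotential_sub_one_of_nonpos (hn : n ≤ 0) :
    coinPotential a b r (n - 1) = coinPotential a b r n := by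
  rw [coinPotential, coinPotential, Int.toNat_of_nonpos hn, Int.toNat_of_nonpos (by lia)]

lemma exp_mul_le_coinPotential (hb : 0 ≤ b) : exp (a * r) ≤ coinPotential a b r n :=
  exp_le_exp.2 (le_add_of_nonneg_right (by positivity))

lemma coinPotential_mono (ha : 0 ≤ a) (hb : 0 ≤ b) {r' n' : ℤ} (hr : r ≤ r') (hn : n ≤ n') :
    coinPotential a b r n ≤ coinPotential a b r' n' := by
  unfold coinPotential
  gcongr
  exact Int.toNat_le_toNat hn

end CoinPotential

/-- The coin game with initial budget `k`, as the recursion satisfied by the reward and budget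
processes: the outcome `X (i + 1)` of round `i + 1` is `1` for a reward (collected only while the
budget is positive), `2` for the loss of a unit of budget, and any other value for neither. -/
structure IsCoinGame {Ω : Type*} (X : ℕ → Ω → ℕ) (k : ℕ) (reward budget : ℕ → Ω → ℤ) : Prop where
  reward_zero : ∀ ω, reward 0 ω = 0
  budget_zero : ∀ ω, budget 0 ω = k
  reward_succ : ∀ i ω, reward (i + 1) ω =
    if X (i + 1) ω = 1 ∧ 0 < budget i ω then reward i ω + 1 else reward i ω
  budget_succ : ∀ i ω, budget (i + 1) ω =
    if X (i + 1) ω = 2 then budget i ω - 1 else budget i ω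

namespace IsCoinGame

variable {Ω : Type*} {X : ℕ → Ω → ℕ} {k n : ℕ} {reward budget : ℕ → Ω → ℤ}

lemma reward_le (h : IsCoinGame X k reward budget) (n : ℕ) (ω : Ω) : reward n ω ≤ n := by
  induction n with
  | zero => simp [h.reward_zero]
  | succ n ih => grind [h.reward_succ n ω]

lemma budget_le (h : IsCoinGame X k reward budget) (n : ℕ) (ω : Ω) : budget n ω ≤ k := by
  induction n with
  | zero => simp [h.budget_zero]
  | succ n ih => grind [h.budget_succ n ω]

lemma coinPotential_zero (h : IsCoinGame X k reward budget) (a b : ℝ) (ω : Ω) :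
    coinPotential a b (reward 0 ω) (budget 0 ω) = exp (b * k) := by
  simp [coinPotential, h.reward_zero, h.budget_zero]

lemma coinPotential_succ (h : IsCoinGame X k reward budget) (a b : ℝ) (n : ℕ) (ω : Ω) :
    let Z := {ω | 0 < budget n ω}.indicator fun ω => coinPotential a b (reward n ω) (budget n ω)
    coinPotential a b (reward (n + 1) ω) (budget (n + 1) ω) =
      coinPotential a b (reward n ω) (budget n ω) +
        ((exp a - 1) * (X (n + 1) ⁻¹' {1}).indicator Z ω -
          (1 - exp (-b)) * (X (n + 1) ⁻¹' {2}).indicator Z ω) := by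
  intro Z
  simp only [Z, Set.indicator, Set.mem_preimage, Set.mem_singleton_iff, Set.mem_ofPred_eq,
    h.reward_succ, h.budget_succ]
  grind [coinPotential_add_one, coinPotential_sub_one_of_pos, coinPotential_sub_one_of_nonpos]

variable {m0 : MeasurableSpace Ω} {μ : Measure Ω} {𝓕 : Filtration ℕ m0} {a b c : ℝ}

lemma measurable_reward_budget (h : IsCoinGame X k reward budget)
    (hX : ∀ i < n, Measurable[𝓕 (i + 1)] (X (i + 1))) :
    Measurable[𝓕 n] (reward n) ∧ Measurable[𝓕 n] (budget n) := by
  induction n with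
  | zero =>
    rw [funext h.reward_zero, funext h.budget_zero]
    exact ⟨measurable_const, measurable_const⟩
  | succ n ih =>
    obtain ⟨h_reward, h_budget⟩ := ih fun i hi => hX i (by lia)
    replace h_reward := h_reward.mono (𝓕.mono n.le_succ) le_rfl
    replace h_budget := h_budget.mono (𝓕.mono n.le_succ) le_rfl
    have hXn := hX n n.lt_succ_self
    rw [funext (h.reward_succ n), funext (h.budget_succ n)]
    refine ⟨.ite ?_ (h_reward.add_const 1) h_reward, .ite ?_ (h_budget.sub_const 1) h_budget⟩
    · exact (hXn (measurableSet_singleton 1)).inter (h_budget measurableSet_Ioi)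
    · exact hXn (measurableSet_singleton 2)

lemma measurable_coinPotential (h : IsCoinGame X k reward budget)
    (hX : ∀ i < n, Measurable[𝓕 (i + 1)] (X (i + 1))) (a b : ℝ) :
    Measurable[𝓕 n] fun ω => coinPotential a b (reward n ω) (budget n ω) := by
  obtain ⟨h_reward, h_budget⟩ := h.measurable_reward_budget hX
  exact (measurable_of_countable fun x : ℤ × ℤ => coinPotential a b x.1 x.2).comp
    (h_reward.prodMk h_budget)

lemma integrable_coinPotential [IsFiniteMeasure μ] (h : IsCoinGame X k reward budget)
    (hX : ∀ i < n, Measurable[𝓕 (i + 1)] (X (i + 1))) (ha : 0 ≤ a) (hb : 0 ≤ b) :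
    Integrable (fun ω => coinPotential a b (reward n ω) (budget n ω)) μ := by
  refine .of_bound ((h.measurable_coinPotential hX a b).mono (𝓕.le n) le_rfl).aestronglyMeasurable
    (coinPotential a b n k) (.of_forall fun ω => ?_)
  rw [norm_of_nonneg coinPotential_pos.le]
  exact coinPotential_mono ha hb (h.reward_le n ω) (h.budget_le n ω)

lemma integral_coinPotential_succ_le [IsFiniteMeasure μ] (h : IsCoinGame X k reward budget)
    (hX : ∀ i < n + 1, Measurable[𝓕 (i + 1)] (X (i + 1))) (ha : 0 ≤ a) (hb : 0 ≤ b)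
    (hab : exp a - 1 ≤ c * (1 - exp (-b)))
    (hc : ∀ᵐ ω ∂μ, c * (μ⟦X (n + 1) ⁻¹' {1} | 𝓕 n⟧) ω ≤ (μ⟦X (n + 1) ⁻¹' {2} | 𝓕 n⟧) ω) :
    ∫ ω, coinPotential a b (reward (n + 1) ω) (budget (n + 1) ω) ∂μ ≤
      ∫ ω, coinPotential a b (reward n ω) (budget n ω) ∂μ := by
  have hX_past : ∀ i < n, Measurable[𝓕 (i + 1)] (X (i + 1)) := fun i hi => hX i (by lia)
  have hpos : MeasurableSet[𝓕 n] {ω | 0 < budget n ω} :=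
    (h.measurable_reward_budget hX_past).2 measurableSet_Ioi
  have h_outcome (j : ℕ) : MeasurableSet (X (n + 1) ⁻¹' {j}) :=
    𝓕.le (n + 1) _ (hX n n.lt_succ_self (measurableSet_singleton j))
  have hV := h.integrable_coinPotential (μ := μ) hX_past ha hb
  set Z := {ω | 0 < budget n ω}.indicator fun ω => coinPotential a b (reward n ω) (budget n ω)
    with hZ
  have hZ_int : Integrable Z μ := hV.indicator (𝓕.le n _ hpos)
  have hZ_nonneg : ∀ ω, 0 ≤ Z ω := Set.indicator_nonneg fun _ _ => coinPotential_pos.le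
  have h_gain := (hZ_int.indicator (h_outcome 1)).const_mul (exp a - 1)
  have h_loss := (hZ_int.indicator (h_outcome 2)).const_mul (1 - exp (-b))
  have h_change : Integrable (fun ω => (exp a - 1) * (X (n + 1) ⁻¹' {1}).indicator Z ω -
      (1 - exp (-b)) * (X (n + 1) ⁻¹' {2}).indicator Z ω) μ := h_gain.sub h_loss
  have h_odds : c * ∫ ω in X (n + 1) ⁻¹' {1}, Z ω ∂μ ≤ ∫ ω in X (n + 1) ⁻¹' {2}, Z ω ∂μ :=
    mul_setIntegral_le_of_condProb_le (𝓕.le n)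
      ((h.measurable_coinPotential hX_past a b).indicator hpos).stronglyMeasurable
      hZ_int (.of_forall hZ_nonneg) (h_outcome 1) (h_outcome 2) hc
  have h_drift : (exp a - 1) * ∫ ω in X (n + 1) ⁻¹' {1}, Z ω ∂μ ≤
      (1 - exp (-b)) * ∫ ω in X (n + 1) ⁻¹' {2}, Z ω ∂μ := by
    calc (exp a - 1) * ∫ ω in X (n + 1) ⁻¹' {1}, Z ω ∂μ
      _ ≤ c * (1 - exp (-b)) * ∫ ω in X (n + 1) ⁻¹' {1}, Z ω ∂μ :=
        mul_le_mul_of_nonneg_right hab (integral_nonneg hZ_nonneg)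
      _ = (1 - exp (-b)) * (c * ∫ ω in X (n + 1) ⁻¹' {1}, Z ω ∂μ) := by ring
      _ ≤ (1 - exp (-b)) * ∫ ω in X (n + 1) ⁻¹' {2}, Z ω ∂μ :=
        mul_le_mul_of_nonneg_left h_odds (sub_nonneg.2 (exp_le_one_iff.2 (by linarith)))
  simp only [h.coinPotential_succ a b n, ← hZ]
  rw [integral_add hV h_change, integral_sub h_gain h_loss, integral_const_mul,
    integral_const_mul, integral_indicator (h_outcome 1), integral_indicator (h_outcome 2)]
  linarith

lemma integral_coinPotential_le [IsProbabilityMeasure μ] (h : IsCoinGame X k reward budget)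
    (hX : ∀ i < n, Measurable[𝓕 (i + 1)] (X (i + 1))) (ha : 0 ≤ a) (hb : 0 ≤ b)
    (hab : exp a - 1 ≤ c * (1 - exp (-b)))
    (hc : ∀ i < n,
      ∀ᵐ ω ∂μ, c * (μ⟦X (i + 1) ⁻¹' {1} | 𝓕 i⟧) ω ≤ (μ⟦X (i + 1) ⁻¹' {2} | 𝓕 i⟧) ω) :
    ∫ ω, coinPotential a b (reward n ω) (budget n ω) ∂μ ≤ exp (b * k) := by
  induction n with
  | zero => simp [h.coinPotential_zero]
  | succ n ih =>
    exact (h.integral_coinPotential_succ_le hX ha hb hab (hc n n.lt_succ_self)).trans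
      (ih (fun i hi => hX i (by lia)) fun i hi => hc i (by lia))

lemma integrable_exp_mul_reward [IsFiniteMeasure μ] (h : IsCoinGame X k reward budget)
    (hX : ∀ i < n, Measurable[𝓕 (i + 1)] (X (i + 1))) (ha : 0 ≤ a) :
    Integrable (fun ω => exp (a * reward n ω)) μ := by
  simpa [coinPotential] using h.integrable_coinPotential (μ := μ) hX ha le_rfl

lemma mgf_reward_le [IsProbabilityMeasure μ] (h : IsCoinGame X k reward budget)
    (hX : ∀ i < n, Measurable[𝓕 (i + 1)] (X (i + 1))) (ha : 0 ≤ a) (hb : 0 ≤ b)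
    (hab : exp a - 1 ≤ c * (1 - exp (-b)))
    (hc : ∀ i < n,
      ∀ᵐ ω ∂μ, c * (μ⟦X (i + 1) ⁻¹' {1} | 𝓕 i⟧) ω ≤ (μ⟦X (i + 1) ⁻¹' {2} | 𝓕 i⟧) ω) :
    mgf (fun ω => (reward n ω : ℝ)) μ a ≤ exp (b * k) :=
  (integral_mono (h.integrable_exp_mul_reward hX ha) (h.integrable_coinPotential hX ha hb)
    fun _ => exp_mul_le_coinPotential hb).trans (h.integral_coinPotential_le hX ha hb hab hc)

end IsCoinGame

lemma exp_one_sixth_sub_one_le : exp (1 / 6) - 1 ≤ 1 / 5 * (1 - exp (-3)) := by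
  have h_sixth : exp (1 / 6) ≤ 19 / 16 :=
    (exp_bound' (n := 2) (by norm_num) (by norm_num) (by norm_num)).trans
      (by norm_num [Finset.sum_range_succ])
  have h_three : 16 ≤ exp 3 := by
    calc (16 : ℝ) ≤ 2.7 ^ 3 := by norm_num
      _ ≤ exp 1 ^ 3 := by gcongr; linarith [exp_one_gt_d9]
      _ = exp 3 := by rw [exp_one_pow]; norm_num
  have h_neg_three : exp (-3) ≤ 1 / 16 := by
    rw [exp_neg, ← one_div]
    exact one_div_le_one_div_of_le (by norm_num) h_three
  linarith

theorem coin_game_tail_bound_general {Ω : Type*} {m0 : MeasurableSpace Ω} {μ : Measure Ω}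
    [IsProbabilityMeasure μ] {𝓕 : Filtration ℕ m0} {m k : ℕ} {X : ℕ → Ω → ℕ}
    {reward budget : ℕ → Ω → ℤ} {a b c : ℝ} (h : IsCoinGame X k reward budget)
    (hX : ∀ i < m, Measurable[𝓕 (i + 1)] (X (i + 1))) (ha : 0 ≤ a) (hb : 0 ≤ b)
    (hab : exp a - 1 ≤ c * (1 - exp (-b)))
    (hc : ∀ i < m,
      ∀ᵐ ω ∂μ, c * (μ⟦X (i + 1) ⁻¹' {1} | 𝓕 i⟧) ω ≤ (μ⟦X (i + 1) ⁻¹' {2} | 𝓕 i⟧) ω)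
    (lam : ℝ) :
    μ {ω | lam ≤ (reward m ω : ℝ)} ≤ ENNReal.ofReal (exp (-a * lam + b * k)) := by
  rw [← ofReal_measureReal, exp_add]
  exact ENNReal.ofReal_le_ofReal <|
    (measure_ge_le_exp_mul_mgf lam ha (h.integrable_exp_mul_reward hX ha)).trans <|
      mul_le_mul_of_nonneg_left (h.mgf_reward_le hX ha hb hab hc) (exp_pos _).le

/-- Tail bound for the adaptive coin-flipping game: an adaptive adversary with initial
budget `k` (choosing, in each round, a reward bias `p i ∈ [0, 5/6]` and a budget-loss bias
`q i ∈ [p i / 5, 1 − p i]` measurably with respect to the past) collects more than `λ`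
rewards with probability at most `exp(−λ/6 + 3(k+1))`. -/
theorem coin_game_tail_bound {Ω : Type*} {m0 : MeasurableSpace Ω}
    (μ : Measure Ω) [IsProbabilityMeasure μ]
    (𝓕 : Filtration ℕ m0) (m : ℕ) (k : ℕ)
    (p q : ℕ → Ω → ℝ) (X : ℕ → Ω → ℕ)
    (hX_range : ∀ i ω, X i ω ≤ 2)
    (hX_meas : ∀ i, 1 ≤ i → i ≤ m → Measurable[𝓕 i] (X i))
    (hp_meas : ∀ i, 1 ≤ i → i ≤ m → Measurable[𝓕 (i - 1)] (p i))
    (hq_meas : ∀ i, 1 ≤ i → i ≤ m → Measurable[𝓕 (i - 1)] (q i))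
    (hp_bound : ∀ i, 1 ≤ i → i ≤ m → ∀ᵐ ω ∂μ, 0 ≤ p i ω ∧ p i ω ≤ 5 / 6)
    (hq_bound : ∀ i, 1 ≤ i → i ≤ m → ∀ᵐ ω ∂μ, p i ω / 5 ≤ q i ω ∧ q i ω ≤ 1 - p i ω)
    (hcond1 : ∀ i, 1 ≤ i → i ≤ m →
      μ[Set.indicator {ω | X i ω = 1} (fun _ => (1 : ℝ)) | 𝓕 (i - 1)] =ᵐ[μ] p i)
    (hcond2 : ∀ i, 1 ≤ i → i ≤ m →
      μ[Set.indicator {ω | X i ω = 2} (fun _ => (1 : ℝ)) | 𝓕 (i - 1)] =ᵐ[μ] q i)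
    (reward budget : ℕ → Ω → ℤ)
    (hreward0 : ∀ ω, reward 0 ω = 0) (hbudget0 : ∀ ω, budget 0 ω = (k : ℤ))
    (hreward : ∀ i ω, reward (i + 1) ω =
      if X (i + 1) ω = 1 ∧ 0 < budget i ω then reward i ω + 1 else reward i ω)
    (hbudget : ∀ i ω, budget (i + 1) ω =
      if X (i + 1) ω = 2 then budget i ω - 1 else budget i ω) :
    ∀ lam : ℝ, μ {ω | lam < (reward m ω : ℝ)} ≤
      ENNReal.ofReal (Real.exp (-lam / 6 + 3 * (k + 1))) := by
  have h_odds : ∀ i < m, ∀ᵐ ω ∂μ,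
      1 / 5 * (μ⟦X (i + 1) ⁻¹' {1} | 𝓕 i⟧) ω ≤ (μ⟦X (i + 1) ⁻¹' {2} | 𝓕 i⟧) ω := fun i hi => by
    filter_upwards [hcond1 (i + 1) (by lia) hi, hcond2 (i + 1) (by lia) hi,
      hq_bound (i + 1) (by lia) hi] with ω hp hq hpq
    rw [one_div_mul_eq_div]
    exact hp.symm ▸ hq.symm ▸ hpq.1
  intro lam
  calc μ {ω | lam < (reward m ω : ℝ)}
    _ ≤ μ {ω | lam ≤ (reward m ω : ℝ)} := measure_mono fun ω (hω : lam < reward m ω) => hω.le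
    _ ≤ ENNReal.ofReal (exp (-(1 / 6) * lam + 3 * k)) :=
      coin_game_tail_bound_general ⟨hreward0, hbudget0, hreward, hbudget⟩
        (fun i hi => hX_meas (i + 1) (by lia) hi) (by norm_num) (by norm_num)
        exp_one_sixth_sub_one_le h_odds lam
    _ ≤ ENNReal.ofReal (exp (-lam / 6 + 3 * (k + 1))) :=
      ENNReal.ofReal_le_ofReal (exp_le_exp.2 (by linarith))
end

section
/- (Basic composition for product measures.) Let (μ_1, ν_1) and (μ_2, ν_2) be pairs of probability measures on measurable spaces Ω_1 and Ω_2 respectively, with μ_1 ≈_{(ε_1,δ_1)} ν_1 and μ_2 ≈_{(ε_2,δ_2)} ν_2. Then the product measures satisfy μ_1 ⊗ μ_2 ≈_{(ε_1+ε_2, δ_1+δ_2)} ν_1 ⊗ ν_2. -/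
open MeasureTheory

/-!
The smallest `δ` for which `μ F ≤ e^ε · ν F + δ` holds for all `F` is the mass of the truncated
difference `μ - e^ε • ν`, so it suffices to bound that mass for product measures. Absorb `e^ε` into
`ν` and let `ρ` be the part of `μ₂` left after removing the excess `μ₂ - ν₂`, so that `ρ` lies below
both `μ₂` and `ν₂`. Then

`μ₁ ⊗ μ₂ = μ₁ ⊗ ρ + μ₁ ⊗ (μ₂ - ν₂) ≤ ν₁ ⊗ ρ + (μ₁ - ν₁) ⊗ ρ + μ₁ ⊗ (μ₂ - ν₂)`.

Bounding `ρ` by `ν₂` in the first term and by `μ₂` in the second avoids a factor `e^ε₂` on `δ₁`.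
-/

open Set
open scoped ENNReal NNReal

section TruncatedSub

variable {Ω Ω₁ Ω₂ : Type*} [MeasurableSpace Ω] [MeasurableSpace Ω₁] [MeasurableSpace Ω₂]

lemma measure_le_sub_add (μ ν : Measure Ω) [IsFiniteMeasure μ] [IsFiniteMeasure ν] :
    μ ≤ μ - ν + ν :=
  Measure.sub_le_iff_le_add.mp le_rfl

lemma measure_sub_univ_le_iff {μ ν : Measure Ω} [IsFiniteMeasure μ] [IsFiniteMeasure ν]
    {d : ℝ≥0∞} :
    (μ - ν) univ ≤ d ↔ ∀ F, MeasurableSet F → μ F ≤ ν F + d := by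
  constructor
  · intro h F _
    calc μ F ≤ (μ - ν) F + ν F := measure_le_sub_add μ ν F
      _ ≤ d + ν F := by gcongr; exact (measure_mono (subset_univ F)).trans h
      _ = ν F + d := add_comm _ _
  · intro h
    obtain ⟨s, hs⟩ := exists_isHahnDecomposition μ ν
    have hs_compl : MeasurableSet sᶜ := hs.measurableSet.compl
    have sub_compl : (μ - ν) sᶜ = μ sᶜ - ν sᶜ := by
      rw [← Measure.restrict_apply_self,
        Measure.restrict_sub_eq_restrict_sub_restrict hs_compl,
        Measure.sub_apply hs_compl hs.ge_on_compl,
        Measure.restrict_apply_self, Measure.restrict_apply_self]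
    calc (μ - ν) univ = (μ - ν) s + (μ - ν) sᶜ := (measure_add_measure_compl hs.measurableSet).symm
      _ = μ sᶜ - ν sᶜ := by
        rw [Measure.sub_apply_eq_zero_of_isHahnDecomposition hs, zero_add, sub_compl]
      _ ≤ d := tsub_le_iff_left.mpr (h sᶜ hs_compl)

lemma measure_prod_sub_prod_le (μ₁ ν₁ : Measure Ω₁) (μ₂ ν₂ : Measure Ω₂)
    [IsFiniteMeasure μ₁] [IsFiniteMeasure ν₁] [IsFiniteMeasure μ₂] [IsFiniteMeasure ν₂] :
    μ₁.prod μ₂ - ν₁.prod ν₂ ≤ (μ₁ - ν₁).prod μ₂ + μ₁.prod (μ₂ - ν₂) := by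
  let ρ := μ₂ - (μ₂ - ν₂)
  have ρ_add : ρ + (μ₂ - ν₂) = μ₂ := Measure.sub_add_cancel_of_le Measure.sub_le
  have ρ_le_left : ρ ≤ μ₂ := Measure.sub_le
  have ρ_le_right : ρ ≤ ν₂ :=
    Measure.sub_le_of_le_add ((measure_le_sub_add μ₂ ν₂).trans_eq (add_comm _ _))
  apply Measure.sub_le_of_le_add
  calc μ₁.prod μ₂ = μ₁.prod ρ + μ₁.prod (μ₂ - ν₂) := by rw [← Measure.prod_add, ρ_add]
    _ ≤ (μ₁ - ν₁ + ν₁).prod ρ + μ₁.prod (μ₂ - ν₂) := by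
      gcongr; exact measure_le_sub_add μ₁ ν₁
    _ = (μ₁ - ν₁).prod ρ + ν₁.prod ρ + μ₁.prod (μ₂ - ν₂) := by rw [Measure.add_prod]
    _ ≤ (μ₁ - ν₁).prod μ₂ + ν₁.prod ν₂ + μ₁.prod (μ₂ - ν₂) := by gcongr
    _ = (μ₁ - ν₁).prod μ₂ + μ₁.prod (μ₂ - ν₂) + ν₁.prod ν₂ := add_right_comm _ _ _

end TruncatedSub

/-- The hockey-stick divergence `sup_F (μ F - c · ν F)` of finite measures, encoded as the mass of
the truncated difference `μ - c • ν`. With `c = e^ε` it is the least `δ` in one direction of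
`ApproxIndist ε δ μ ν`. -/
noncomputable def hockeyStickDiv {Ω : Type*} [MeasurableSpace Ω] (c : ℝ≥0) (μ ν : Measure Ω) :
    ℝ≥0∞ :=
  (μ - c • ν) univ

lemma hockeyStickDiv_prod_le {Ω₁ Ω₂ : Type*} [MeasurableSpace Ω₁] [MeasurableSpace Ω₂]
    (c₁ c₂ : ℝ≥0) (μ₁ ν₁ : Measure Ω₁) (μ₂ ν₂ : Measure Ω₂)
    [IsFiniteMeasure μ₁] [IsFiniteMeasure ν₁] [IsFiniteMeasure μ₂] [IsFiniteMeasure ν₂] :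
    hockeyStickDiv (c₁ * c₂) (μ₁.prod μ₂) (ν₁.prod ν₂) ≤
      hockeyStickDiv c₁ μ₁ ν₁ * μ₂ univ + μ₁ univ * hockeyStickDiv c₂ μ₂ ν₂ := by
  have smul_prod_smul : (c₁ • ν₁).prod (c₂ • ν₂) = (c₁ * c₂) • ν₁.prod ν₂ := by
    rw [Measure.prod_smul_left, Measure.prod_smul_right, mul_smul]
  have h := measure_prod_sub_prod_le μ₁ (c₁ • ν₁) μ₂ (c₂ • ν₂) univ
  rwa [smul_prod_smul, Measure.add_apply, ← univ_prod_univ, Measure.prod_prod,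
    Measure.prod_prod, univ_prod_univ] at h

lemma approxIndist_iff_hockeyStickDiv_le {Ω : Type*} [MeasurableSpace Ω] {ε δ : ℝ}
    {μ ν : Measure Ω} [IsFiniteMeasure μ] [IsFiniteMeasure ν] :
    ApproxIndist ε δ μ ν ↔
      hockeyStickDiv (Real.exp ε).toNNReal μ ν ≤ ENNReal.ofReal δ ∧
        hockeyStickDiv (Real.exp ε).toNNReal ν μ ≤ ENNReal.ofReal δ := by
  simp only [hockeyStickDiv, measure_sub_univ_le_iff, ← forall_and]
  rfl

theorem approxIndist_prod_general {Ω₁ Ω₂ : Type*} [MeasurableSpace Ω₁] [MeasurableSpace Ω₂]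
    (μ₁ ν₁ : Measure Ω₁) (μ₂ ν₂ : Measure Ω₂)
    [IsFiniteMeasure μ₁] [IsFiniteMeasure ν₁] [IsFiniteMeasure μ₂] [IsFiniteMeasure ν₂]
    (ε₁ ε₂ δ₁ δ₂ : ℝ) (hδ₁ : 0 ≤ δ₁) (hδ₂ : 0 ≤ δ₂)
    (h₁ : ApproxIndist ε₁ δ₁ μ₁ ν₁) (h₂ : ApproxIndist ε₂ δ₂ μ₂ ν₂) :
    ApproxIndist (ε₁ + ε₂)
      (δ₁ * max (μ₂.real univ) (ν₂.real univ) + max (μ₁.real univ) (ν₁.real univ) * δ₂)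
      (μ₁.prod μ₂) (ν₁.prod ν₂) := by
  rw [approxIndist_iff_hockeyStickDiv_le] at h₁ h₂ ⊢
  have ofReal_delta : ENNReal.ofReal
      (δ₁ * max (μ₂.real univ) (ν₂.real univ) + max (μ₁.real univ) (ν₁.real univ) * δ₂) =
      ENNReal.ofReal δ₁ * max (μ₂ univ) (ν₂ univ) +
        max (μ₁ univ) (ν₁ univ) * ENNReal.ofReal δ₂ := by
    rw [ENNReal.ofReal_add (by positivity) (by positivity), ENNReal.ofReal_mul hδ₁,
      ENNReal.ofReal_mul' hδ₂]
    simp only [ENNReal.ofReal_max, ofReal_measureReal (measure_ne_top _ _)]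
  rw [ofReal_delta, Real.exp_add, Real.toNNReal_mul (Real.exp_nonneg ε₁)]
  constructor
  · refine (hockeyStickDiv_prod_le ..).trans ?_
    gcongr
    exacts [h₁.1, le_max_left _ _, le_max_left _ _, h₂.1]
  · refine (hockeyStickDiv_prod_le ..).trans ?_
    gcongr
    exacts [h₁.2, le_max_right _ _, le_max_right _ _, h₂.2]

/-- Basic composition for product measures: if `μ₁ ≈_{(ε₁,δ₁)} ν₁` and `μ₂ ≈_{(ε₂,δ₂)} ν₂`
then `μ₁ ⊗ μ₂ ≈_{(ε₁+ε₂, δ₁+δ₂)} ν₁ ⊗ ν₂`. -/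
theorem approxIndist_prod {Ω₁ Ω₂ : Type*} [MeasurableSpace Ω₁] [MeasurableSpace Ω₂]
    (μ₁ ν₁ : Measure Ω₁) (μ₂ ν₂ : Measure Ω₂)
    [IsProbabilityMeasure μ₁] [IsProbabilityMeasure ν₁]
    [IsProbabilityMeasure μ₂] [IsProbabilityMeasure ν₂]
    (ε₁ ε₂ δ₁ δ₂ : ℝ) (hε₁ : 0 ≤ ε₁) (hε₂ : 0 ≤ ε₂) (hδ₁ : 0 ≤ δ₁) (hδ₂ : 0 ≤ δ₂)
    (h₁ : ApproxIndist ε₁ δ₁ μ₁ ν₁) (h₂ : ApproxIndist ε₂ δ₂ μ₂ ν₂) :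
    ApproxIndist (ε₁ + ε₂) (δ₁ + δ₂) (μ₁.prod μ₂) (ν₁.prod ν₂) := by
  simpa only [probReal_univ, max_self, mul_one, one_mul] using
    approxIndist_prod_general μ₁ ν₁ μ₂ ν₂ ε₁ ε₂ δ₁ δ₂ hδ₁ hδ₂ h₁ h₂
end

section
/- (Advanced composition for product measures; non-adaptive core of the paper's composition theorem for challenge differential privacy.) Let ε > 0, δ ≥ 0, δ' > 0, let m be a positive integer, and for each 1 ≤ ℓ ≤ m let μ_ℓ and ν_ℓ be probability measures on a measurable space Ω_ℓ with μ_ℓ ≈_{(ε,δ)} ν_ℓ. Then the m-fold product measures satisfy ⊗_{ℓ=1}^m μ_ℓ ≈_{(ε', mδ + δ')} ⊗_{ℓ=1}^m ν_ℓ, where ε' = √(2m·ln(1/δ'))·ε + m·ε·(e^ε − 1). -/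
open MeasureTheory

/-!
By a Hahn decomposition `μ ⊓ e^ε • ν` has mass at least `1 - δ`, so two `(ε, δ)`-indistinguishable
probability measures contain, with weight `1 - δ`, a pair of `(ε, 0)`-indistinguishable ones (the
pure case), and it suffices to compose the latter. The log-likelihood ratio of two product measures
is the sum of the independent ratios of the factors, each bounded by `ε` and of mean at most
`ε (e^ε - 1)`, the mean being a Kullback–Leibler divergence; Hoeffding's inequality bounds the tail
of this sum, and off the tail the densities differ by at most the composed factor.
-/

open ProbabilityTheory InformationTheory
open scoped ENNReal

section RealInequalities

theorem one_sub_sum_le_prod_one_sub {ι : Type*} (s : Finset ι) {a : ι → ℝ}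
    (h0 : ∀ i ∈ s, 0 ≤ a i) (h1 : ∀ i ∈ s, a i ≤ 1) :
    1 - ∑ i ∈ s, a i ≤ ∏ i ∈ s, (1 - a i) := by
  induction s using Finset.cons_induction with
  | empty => simp
  | cons i s hi ih =>
    rw [Finset.forall_mem_cons] at h0 h1
    rw [Finset.sum_cons, Finset.prod_cons]
    have hsum : 0 ≤ ∑ j ∈ s, a j := Finset.sum_nonneg h0.2
    calc 1 - (a i + ∑ j ∈ s, a j) ≤ (1 - a i) * (1 - ∑ j ∈ s, a j) := by
          linarith [mul_nonneg h0.1 hsum]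
      _ ≤ (1 - a i) * ∏ j ∈ s, (1 - a j) :=
          mul_le_mul_of_nonneg_left (ih h0.2 h1.2) (sub_nonneg.2 h1.1)

theorem abs_exp_sub_one_le_exp_abs_sub_one (t : ℝ) : |Real.exp t - 1| ≤ Real.exp |t| - 1 := by
  rcases le_total 0 t with ht | ht
  · rw [abs_of_nonneg ht, abs_of_nonneg (sub_nonneg.2 (Real.one_le_exp ht))]
  · rw [abs_of_nonpos ht, abs_of_nonpos (sub_nonpos.2 (Real.exp_le_one_iff.2 ht))]
    linarith [Real.add_one_le_exp t, Real.add_one_le_exp (-t)]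

theorem klFun_exp_le {t ε : ℝ} (ht : |t| ≤ ε) :
    klFun (Real.exp t) ≤ ε * (Real.exp ε - 1) := by
  have hε : 0 ≤ ε := (abs_nonneg t).trans ht
  calc klFun (Real.exp t) ≤ t * (Real.exp t - 1) := by
        rw [klFun_apply, Real.log_exp]
        linarith [Real.add_one_le_exp t]
    _ ≤ |t| * |Real.exp t - 1| := (le_abs_self _).trans_eq (abs_mul _ _)
    _ ≤ |t| * (Real.exp |t| - 1) := by
        gcongr
        exact abs_exp_sub_one_le_exp_abs_sub_one t
    _ ≤ ε * (Real.exp ε - 1) := by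
        gcongr
        exact sub_nonneg.2 (Real.one_le_exp (abs_nonneg t))

end RealInequalities

section LatticeOfMeasures

variable {Ω : Type*} [MeasurableSpace Ω] {μ ν : Measure Ω}

theorem measure_univ_le_inf_add [IsFiniteMeasure μ] [IsFiniteMeasure ν] {δ : ℝ≥0∞}
    (h : ∀ F, MeasurableSet F → μ F ≤ ν F + δ) : μ .univ ≤ (μ ⊓ ν) .univ + δ := by
  obtain ⟨s, hs⟩ := exists_isHahnDecomposition μ ν
  have hinf : μ.restrict s + ν.restrict sᶜ ≤ μ ⊓ ν := by
    refine le_inf ?_ ?_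
    · calc μ.restrict s + ν.restrict sᶜ ≤ μ.restrict s + μ.restrict sᶜ :=
            add_le_add le_rfl hs.ge_on_compl
        _ = μ := Measure.restrict_add_restrict_compl hs.measurableSet
    · calc μ.restrict s + ν.restrict sᶜ ≤ ν.restrict s + ν.restrict sᶜ :=
            add_le_add hs.le_on le_rfl
        _ = ν := Measure.restrict_add_restrict_compl hs.measurableSet
  calc μ .univ = μ s + μ sᶜ := (measure_add_measure_compl hs.measurableSet).symm
    _ ≤ μ s + (ν sᶜ + δ) := by gcongr; exact h _ hs.measurableSet.compl
    _ = (μ.restrict s + ν.restrict sᶜ) .univ + δ := by simp [add_assoc]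
    _ ≤ (μ ⊓ ν) .univ + δ := by gcongr

theorem inf_smul_le_smul_inf {c : ℝ≥0∞} (h1 : 1 ≤ c) (hc : c ≠ ∞) :
    μ ⊓ c • ν ≤ c • (μ ⊓ ν) := by
  have hc0 : c ≠ 0 := (one_pos.trans_le h1).ne'
  have hinv : c⁻¹ • (μ ⊓ c • ν) ≤ μ ⊓ ν := by
    refine le_inf ?_ ?_
    · calc c⁻¹ • (μ ⊓ c • ν) ≤ (1 : ℝ≥0∞) • μ := by
            gcongr
            exacts [ENNReal.inv_le_one.2 h1, inf_le_left]
        _ = μ := one_smul _ μ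
    · calc c⁻¹ • (μ ⊓ c • ν) ≤ c⁻¹ • c • ν := by gcongr; exact inf_le_right
        _ = ν := by rw [smul_smul, ENNReal.inv_mul_cancel hc0 hc, one_smul]
  calc μ ⊓ c • ν = c • c⁻¹ • (μ ⊓ c • ν) := by
        rw [smul_smul, ENNReal.mul_inv_cancel hc0 hc, one_smul]
    _ ≤ c • (μ ⊓ ν) := by gcongr

theorem exists_measure_between [IsFiniteMeasure ν] (hμν : μ ≤ ν) {c : ℝ≥0∞}
    (hμc : μ .univ ≤ c) (hcν : c ≤ ν .univ) : ∃ ρ, μ ≤ ρ ∧ ρ ≤ ν ∧ ρ .univ = c := by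
  have : IsFiniteMeasure μ := isFiniteMeasure_of_le ν hμν
  set d := ν - μ
  have hd : d + μ = ν := Measure.sub_add_cancel_of_le hμν
  have hcd : c - μ .univ ≤ d .univ := by
    rw [Measure.sub_apply .univ hμν]
    exact tsub_le_tsub_right hcν _
  refine ⟨((c - μ .univ) / d .univ) • d + μ, Measure.le_add_left le_rfl, ?_, ?_⟩
  · calc ((c - μ .univ) / d .univ) • d + μ ≤ (1 : ℝ≥0∞) • d + μ := by
          gcongr
          exact ENNReal.div_le_of_le_mul (by rwa [one_mul])
      _ = ν := by rw [one_smul, hd]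
  · rw [Measure.add_apply, Measure.smul_apply, smul_eq_mul, ENNReal.div_mul_cancel',
      tsub_add_cancel_of_le hμc]
    · exact fun h0 => nonpos_iff_eq_zero.1 (hcd.trans_eq h0)
    · exact fun h => absurd h (measure_ne_top _ _)

theorem smul_inv_measure_univ_smul_le {a : ℝ≥0∞} (ha : a ≤ μ .univ) :
    a • (μ .univ)⁻¹ • μ ≤ μ :=
  calc a • (μ .univ)⁻¹ • μ = (a / μ .univ) • μ := by rw [smul_smul, div_eq_mul_inv]
    _ ≤ (1 : ℝ≥0∞) • μ := by
        gcongr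
        exact ENNReal.div_le_of_le_mul (by rwa [one_mul])
    _ = μ := one_smul _ μ

end LatticeOfMeasures

theorem ae_rnDeriv_toReal_pos {Ω : Type*} [MeasurableSpace Ω] {μ ν : Measure Ω} [SigmaFinite μ]
    [SigmaFinite ν] (hμν : μ ≪ ν) : ∀ᵐ x ∂μ, 0 < (μ.rnDeriv ν x).toReal := by
  filter_upwards [Measure.rnDeriv_pos hμν, hμν.ae_le (μ.rnDeriv_lt_top ν)] with x hpos hlt
  exact ENNReal.toReal_pos hpos.ne' hlt.ne

section ProductMeasures

variable {ι : Type*} [Fintype ι] {Ω : ι → Type*}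

theorem prod_indicator_eval {M : Type*} [CommMonoidWithZero M] (s : ∀ i, Set (Ω i))
    (f : ∀ i, Ω i → M) (x : ∀ i, Ω i) :
    ∏ i, (s i).indicator (f i) (x i) =
      (Set.univ.pi s).indicator (fun x => ∏ i, f i (x i)) x := by
  classical
  by_cases hx : x ∈ Set.univ.pi s
  · rw [Set.indicator_of_mem hx]
    exact Finset.prod_congr rfl fun i _ => Set.indicator_of_mem (hx i (Set.mem_univ i)) _
  · obtain ⟨i, hi⟩ : ∃ i, x i ∉ s i := by simpa only [Set.mem_univ_pi, not_forall] using hx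
    rw [Set.indicator_of_notMem hx]
    exact Finset.prod_eq_zero (Finset.mem_univ i) (Set.indicator_of_notMem hi _)

variable [∀ i, MeasurableSpace (Ω i)]

theorem prod_smul_measure_pi_le {μ ν : ∀ i, Measure (Ω i)} [∀ i, SigmaFinite (μ i)]
    {c : ι → ℝ≥0∞} (h : ∀ i, c i • μ i ≤ ν i) :
    (∏ i, c i) • Measure.pi μ ≤ Measure.pi ν := by
  have houter : ((∏ i, c i) • Measure.pi μ).toOuterMeasure ≤
      OuterMeasure.pi fun i => (ν i).toOuterMeasure := by
    refine OuterMeasure.le_pi.2 fun t _ => ?_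
    calc (∏ i, c i) * Measure.pi μ (Set.univ.pi t) = ∏ i, c i * μ i (t i) := by
          rw [Measure.pi_pi, Finset.prod_mul_distrib]
      _ ≤ ∏ i, ν i (t i) := Finset.prod_le_prod' fun i _ => h i (t i)
  refine Measure.le_iff.2 fun s hs => (houter s).trans_eq ?_
  rw [Measure.pi, toMeasure_apply _ _ hs]

theorem ofReal_one_sub_sum_smul_measure_pi_le {μ ν : ∀ i, Measure (Ω i)} [∀ i, SigmaFinite (μ i)]
    {a : ι → ℝ} (h0 : ∀ i, 0 ≤ a i) (h1 : ∀ i, a i ≤ 1)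
    (h : ∀ i, ENNReal.ofReal (1 - a i) • μ i ≤ ν i) :
    ENNReal.ofReal (1 - ∑ i, a i) • Measure.pi μ ≤ Measure.pi ν := by
  have hprod : ENNReal.ofReal (1 - ∑ i, a i) ≤ ∏ i, ENNReal.ofReal (1 - a i) := by
    rw [← ENNReal.ofReal_prod_of_nonneg fun i _ => sub_nonneg.2 (h1 i)]
    exact ENNReal.ofReal_le_ofReal <|
      one_sub_sum_le_prod_one_sub _ (fun i _ => h0 i) fun i _ => h1 i
  calc ENNReal.ofReal (1 - ∑ i, a i) • Measure.pi μ
      ≤ (∏ i, ENNReal.ofReal (1 - a i)) • Measure.pi μ := by gcongr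
    _ ≤ Measure.pi ν := prod_smul_measure_pi_le h

theorem lintegral_pi_prod (μ : ∀ i, Measure (Ω i)) [∀ i, IsProbabilityMeasure (μ i)]
    {f : ∀ i, Ω i → ℝ≥0∞} (hf : ∀ i, Measurable (f i)) :
    ∫⁻ x, ∏ i, f i (x i) ∂Measure.pi μ = ∏ i, ∫⁻ x, f i x ∂μ i := by
  rw [lintegral_prod_eq_prod_lintegral_of_indepFun Finset.univ (fun i (x : ∀ i, Ω i) => f i (x i))
    (iIndepFun_pi fun i => (hf i).aemeasurable) fun i => (hf i).comp (measurable_pi_apply i)]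
  exact Finset.prod_congr rfl fun i _ => (measurePreserving_eval μ i).lintegral_comp (hf i)

theorem measure_pi_withDensity (μ : ∀ i, Measure (Ω i)) [∀ i, IsProbabilityMeasure (μ i)]
    {f : ∀ i, Ω i → ℝ≥0∞} (hf : ∀ i, Measurable (f i))
    [∀ i, SigmaFinite ((μ i).withDensity (f i))] :
    Measure.pi (fun i => (μ i).withDensity (f i)) =
      (Measure.pi μ).withDensity fun x => ∏ i, f i (x i) := by
  refine Measure.pi_eq fun s hs => ?_
  calc (Measure.pi μ).withDensity (fun x => ∏ i, f i (x i)) (Set.univ.pi s)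
      = ∫⁻ x, ∏ i, (s i).indicator (f i) (x i) ∂Measure.pi μ := by
        rw [withDensity_apply _ (.univ_pi hs), ← lintegral_indicator (.univ_pi hs)]
        simp_rw [prod_indicator_eval]
    _ = ∏ i, ∫⁻ x, (s i).indicator (f i) x ∂μ i :=
        lintegral_pi_prod μ fun i => (hf i).indicator (hs i)
    _ = ∏ i, (μ i).withDensity (f i) (s i) :=
        Finset.prod_congr rfl fun i _ => by
          rw [withDensity_apply _ (hs i), lintegral_indicator (hs i)]

variable {μ ν : ∀ i, Measure (Ω i)} [∀ i, SigmaFinite (μ i)] [∀ i, IsProbabilityMeasure (ν i)]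

theorem measure_pi_eq_withDensity_rnDeriv (hμν : ∀ i, μ i ≪ ν i) :
    Measure.pi μ = (Measure.pi ν).withDensity fun x => ∏ i, (μ i).rnDeriv (ν i) (x i) := by
  have hdensity : ∀ i, (ν i).withDensity ((μ i).rnDeriv (ν i)) = μ i := fun i =>
    Measure.withDensity_rnDeriv_eq _ _ (hμν i)
  simpa only [hdensity] using measure_pi_withDensity ν fun i => (μ i).measurable_rnDeriv (ν i)

theorem absolutelyContinuous_pi (hμν : ∀ i, μ i ≪ ν i) : Measure.pi μ ≪ Measure.pi ν := by
  rw [measure_pi_eq_withDensity_rnDeriv hμν]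
  exact withDensity_absolutelyContinuous _ _

theorem rnDeriv_pi (hμν : ∀ i, μ i ≪ ν i) :
    (Measure.pi μ).rnDeriv (Measure.pi ν) =ᵐ[Measure.pi ν]
      fun x => ∏ i, (μ i).rnDeriv (ν i) (x i) := by
  rw [measure_pi_eq_withDensity_rnDeriv hμν]
  exact Measure.rnDeriv_withDensity _ (by fun_prop)

theorem llr_pi (hμν : ∀ i, μ i ≪ ν i) :
    llr (Measure.pi μ) (Measure.pi ν) =ᵐ[Measure.pi μ]
      fun x => ∑ i, llr (μ i) (ν i) (x i) := by
  have hpos : ∀ᵐ x ∂Measure.pi μ, ∀ i, 0 < ((μ i).rnDeriv (ν i) (x i)).toReal :=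
    ae_all_iff.2 fun i => Measure.tendsto_eval_ae_ae.eventually <|
      ae_rnDeriv_toReal_pos (hμν i)
  filter_upwards [(absolutelyContinuous_pi hμν).ae_le (rnDeriv_pi hμν), hpos] with x hx hxpos
  simp only [llr]
  rw [hx, ENNReal.toReal_prod, Real.log_prod fun i _ => (hxpos i).ne']

end ProductMeasures

section LogLikelihoodRatio

variable {Ω : Type*} [MeasurableSpace Ω] {μ ν : Measure Ω}

theorem llr_le_of_le_smul [SigmaFinite μ] [SigmaFinite ν] {ε : ℝ}
    (h : μ ≤ ENNReal.ofReal (Real.exp ε) • ν) : ∀ᵐ x ∂μ, llr μ ν x ≤ ε := by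
  have hac : μ ≪ ν := Measure.absolutelyContinuous_of_le_smul h
  have hderiv : μ.rnDeriv ν ≤ᵐ[ν] fun _ => ENNReal.ofReal (Real.exp ε) := by
    refine ae_le_of_forall_setLIntegral_le_of_sigmaFinite (μ.measurable_rnDeriv ν) fun s _ _ => ?_
    rw [setLIntegral_const]
    exact (Measure.setLIntegral_rnDeriv_le s).trans (h s)
  filter_upwards [hac.ae_le hderiv, ae_rnDeriv_toReal_pos hac] with x hx hxpos
  exact (Real.log_le_iff_le_exp hxpos).2 (ENNReal.toReal_le_of_le_ofReal (Real.exp_pos ε).le hx)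

theorem measure_le_exp_mul_add_measure_llr [SigmaFinite μ] [SigmaFinite ν] (hμν : μ ≪ ν)
    (t : ℝ) (F : Set Ω) :
    μ F ≤ ENNReal.ofReal (Real.exp t) * ν F + μ {x | t < llr μ ν x} := by
  have hderiv : ∀ᵐ x ∂ν, x ∈ F \ {x | t < llr μ ν x} →
      μ.rnDeriv ν x ≤ ENNReal.ofReal (Real.exp t) := by
    filter_upwards [μ.rnDeriv_lt_top ν] with x hlt hx
    rw [← ENNReal.ofReal_toReal hlt.ne]
    exact ENNReal.ofReal_le_ofReal <|
      (Real.le_exp_log _).trans (Real.exp_le_exp.2 (not_lt.1 hx.2))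
  have hdiff : μ (F \ {x | t < llr μ ν x}) ≤ ENNReal.ofReal (Real.exp t) * ν F :=
    calc μ (F \ {x | t < llr μ ν x})
        = ∫⁻ x in F \ {x | t < llr μ ν x}, μ.rnDeriv ν x ∂ν :=
          (Measure.setLIntegral_rnDeriv hμν _).symm
      _ ≤ ∫⁻ _ in F \ {x | t < llr μ ν x}, ENNReal.ofReal (Real.exp t) ∂ν :=
          setLIntegral_mono_ae aemeasurable_const hderiv
      _ ≤ ENNReal.ofReal (Real.exp t) * ν F := by
          rw [setLIntegral_const]
          gcongr
          exact Set.sdiff_subset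
  exact (tsub_le_iff_right.1 le_measure_sdiff).trans (add_le_add_left hdiff _)

end LogLikelihoodRatio

theorem measureReal_sqrt_lt_le_of_hasSubgaussianMGF {Ω : Type*} [MeasurableSpace Ω]
    {μ : Measure Ω} [IsFiniteMeasure μ] {X : Ω → ℝ} {c : NNReal} (hX : HasSubgaussianMGF X c μ)
    {δ : ℝ} (hδ : 0 < δ) :
    μ.real {x | √(2 * c * Real.log (1 / δ)) < X x} ≤ δ := by
  rcases eq_or_ne c 0 with rfl | hc
  · have hnull : μ {x | √(2 * (0 : NNReal) * Real.log (1 / δ)) < X x} = 0 :=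
      measure_mono_null (fun _ hx => ((Real.sqrt_nonneg _).trans_lt hx).ne')
        (ae_iff.1 hX.ae_eq_zero_of_hasSubgaussianMGF_zero)
    rw [measureReal_def, hnull]
    exact hδ.le
  calc μ.real {x | √(2 * c * Real.log (1 / δ)) < X x}
      ≤ μ.real {x | √(2 * c * Real.log (1 / δ)) ≤ X x} :=
        measureReal_mono (Set.ofPred_subset_ofPred.2 fun _ => le_of_lt)
    _ ≤ Real.exp (-√(2 * c * Real.log (1 / δ)) ^ 2 / (2 * c)) :=
        hX.measure_ge_le (Real.sqrt_nonneg _)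
    _ ≤ Real.exp (Real.log δ) := by
        have hc' : 0 < (2 * c : ℝ) := by positivity
        gcongr
        rw [div_le_iff₀ hc', neg_le, Real.sq_sqrt']
        refine le_max_of_le_left ?_
        rw [one_div, Real.log_inv]
        linarith
    _ = δ := Real.exp_log hδ

section ApproxIndist

variable {Ω : Type*} [MeasurableSpace Ω] {μ ν : Measure Ω} {ε δ : ℝ}

theorem ApproxIndist.symm (h : ApproxIndist ε δ μ ν) : ApproxIndist ε δ ν μ :=
  fun F hF => (h F hF).symm

theorem approxIndist_zero_iff : ApproxIndist ε 0 μ ν ↔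
    μ ≤ ENNReal.ofReal (Real.exp ε) • ν ∧ ν ≤ ENNReal.ofReal (Real.exp ε) • μ := by
  simp only [ApproxIndist, ENNReal.ofReal_zero, add_zero, Measure.le_iff, Measure.smul_apply,
    smul_eq_mul, forall_and]

theorem ApproxIndist.absolutelyContinuous (h : ApproxIndist ε 0 μ ν) : μ ≪ ν :=
  Measure.absolutelyContinuous_of_le_smul (approxIndist_zero_iff.1 h).1

theorem ApproxIndist.abs_llr_le [SigmaFinite μ] [SigmaFinite ν]
    (h : ApproxIndist ε 0 μ ν) : ∀ᵐ x ∂μ, |llr μ ν x| ≤ ε := by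
  obtain ⟨hμν, hνμ⟩ := approxIndist_zero_iff.1 h
  filter_upwards [llr_le_of_le_smul hμν, h.absolutelyContinuous.ae_le (llr_le_of_le_smul hνμ),
    neg_llr h.absolutelyContinuous] with x hle hge hneg
  exact abs_le'.2 ⟨hle, hneg.trans_le hge⟩

theorem ApproxIndist.hasSubgaussianMGF_llr [IsProbabilityMeasure μ] [SigmaFinite ν]
    (h : ApproxIndist ε 0 μ ν) :
    HasSubgaussianMGF (fun x => llr μ ν x - ∫ y, llr μ ν y ∂μ) (‖ε‖₊ ^ 2) μ := by
  have hmem : ∀ᵐ x ∂μ, llr μ ν x ∈ Set.Icc (-ε) ε := h.abs_llr_le.mono fun _ => abs_le.1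
  have hconst : ‖ε - -ε‖₊ / 2 = ‖ε‖₊ := by
    rw [sub_neg_eq_add, ← two_mul, nnnorm_mul, Real.nnnorm_two, mul_div_cancel_left₀ _ two_ne_zero]
  simpa only [hconst] using hasSubgaussianMGF_of_mem_Icc (measurable_llr μ ν).aemeasurable hmem

theorem ApproxIndist.integral_llr_le [IsProbabilityMeasure μ] [IsProbabilityMeasure ν]
    (h : ApproxIndist ε 0 μ ν) :
    ∫ x, llr μ ν x ∂μ ≤ ε * (Real.exp ε - 1) := by
  have hklFun : ∀ᵐ x ∂ν, klFun (μ.rnDeriv ν x).toReal ≤ ε * (Real.exp ε - 1) := by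
    filter_upwards [h.symm.absolutelyContinuous.ae_le h.abs_llr_le,
      exp_llr_of_ac' μ ν h.symm.absolutelyContinuous] with x habs hexp
    rw [← hexp]
    exact klFun_exp_le habs
  calc ∫ x, llr μ ν x ∂μ = (klDiv μ ν).toReal :=
        (toReal_klDiv_of_measure_eq h.absolutelyContinuous (by simp only [measure_univ])).symm
    _ = ∫ x, klFun (μ.rnDeriv ν x).toReal ∂ν :=
        toReal_klDiv_eq_integral_klFun h.absolutelyContinuous
    _ ≤ ∫ _, ε * (Real.exp ε - 1) ∂ν :=
        integral_mono_of_nonneg (ae_of_all _ fun _ => klFun_nonneg ENNReal.toReal_nonneg)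
          (integrable_const _) hklFun
    _ = ε * (Real.exp ε - 1) := by simp

end ApproxIndist

section PureComposition

variable {ι : Type*} [Fintype ι] {Ω : ι → Type*} [∀ i, MeasurableSpace (Ω i)]
  {μ ν : ∀ i, Measure (Ω i)} [∀ i, IsProbabilityMeasure (μ i)] [∀ i, IsProbabilityMeasure (ν i)]
  {ε : ι → ℝ} {δ : ℝ}

theorem hasSubgaussianMGF_llr_pi (h : ∀ i, ApproxIndist (ε i) 0 (μ i) (ν i)) :
    HasSubgaussianMGF
      (fun x => llr (Measure.pi μ) (Measure.pi ν) x - ∑ i, ∫ y, llr (μ i) (ν i) y ∂μ i)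
      (∑ i, ‖ε i‖₊ ^ 2) (Measure.pi μ) := by
  have hcoord : ∀ i, HasSubgaussianMGF
      (fun x : ∀ i, Ω i => llr (μ i) (ν i) (x i) - ∫ y, llr (μ i) (ν i) y ∂μ i)
      (‖ε i‖₊ ^ 2) (Measure.pi μ) := fun i =>
    .of_map (measurable_pi_apply i).aemeasurable <| by
      rw [(measurePreserving_eval μ i).map_eq]
      exact (h i).hasSubgaussianMGF_llr
  have hindep : iIndepFun (fun i (x : ∀ i, Ω i) =>
      llr (μ i) (ν i) (x i) - ∫ y, llr (μ i) (ν i) y ∂μ i) (Measure.pi μ) :=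
    iIndepFun_pi fun i => ((measurable_llr (μ i) (ν i)).sub_const _).aemeasurable
  refine (HasSubgaussianMGF.sum_of_iIndepFun hindep fun i _ => hcoord i).congr ?_
  filter_upwards [llr_pi fun i => (h i).absolutelyContinuous] with x hx
  rw [hx, Finset.sum_sub_distrib]

theorem measureReal_lt_llr_pi_le (h : ∀ i, ApproxIndist (ε i) 0 (μ i) (ν i)) (hδ : 0 < δ) :
    (Measure.pi μ).real {x | √(2 * (∑ i, ε i ^ 2) * Real.log (1 / δ)) +
      ∑ i, ε i * (Real.exp (ε i) - 1) < llr (Measure.pi μ) (Measure.pi ν) x} ≤ δ := by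
  have hmean : ∑ i, ∫ y, llr (μ i) (ν i) y ∂μ i ≤ ∑ i, ε i * (Real.exp (ε i) - 1) :=
    Finset.sum_le_sum fun i _ => (h i).integral_llr_le
  have htail := measureReal_sqrt_lt_le_of_hasSubgaussianMGF (hasSubgaussianMGF_llr_pi h) hδ
  push_cast [coe_nnnorm, Real.norm_eq_abs, sq_abs] at htail
  refine (measureReal_mono fun x hx => ?_).trans htail
  rw [Set.mem_ofPred_eq] at hx ⊢
  linarith

theorem measure_pi_le_exp_mul_add_of_pure (h : ∀ i, ApproxIndist (ε i) 0 (μ i) (ν i)) (hδ : 0 < δ)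
    (F : Set (∀ i, Ω i)) :
    Measure.pi μ F ≤ ENNReal.ofReal (Real.exp (√(2 * (∑ i, ε i ^ 2) * Real.log (1 / δ)) +
      ∑ i, ε i * (Real.exp (ε i) - 1))) * Measure.pi ν F + ENNReal.ofReal δ :=
  (measure_le_exp_mul_add_measure_llr
    (absolutelyContinuous_pi fun i => (h i).absolutelyContinuous) _ F).trans <|
      add_le_add_right ((ENNReal.le_ofReal_iff_toReal_le (measure_ne_top _ _) hδ.le).2 <|
        measureReal_lt_llr_pi_le h hδ) _

theorem ApproxIndist.pi_of_pure (h : ∀ i, ApproxIndist (ε i) 0 (μ i) (ν i)) (hδ : 0 < δ) :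
    ApproxIndist (√(2 * (∑ i, ε i ^ 2) * Real.log (1 / δ)) + ∑ i, ε i * (Real.exp (ε i) - 1)) δ
      (Measure.pi μ) (Measure.pi ν) :=
  fun F _ => ⟨measure_pi_le_exp_mul_add_of_pure h hδ F,
    measure_pi_le_exp_mul_add_of_pure (fun i => (h i).symm) hδ F⟩

end PureComposition

section Decomposition

variable {Ω : Type*} [MeasurableSpace Ω] {μ ν P Q : Measure Ω} {ε δ η : ℝ}

theorem ApproxIndist.smul_of_pure (h : ApproxIndist ε 0 μ ν) (c : ℝ≥0∞) :
    ApproxIndist ε 0 (c • μ) (c • ν) := by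
  rw [approxIndist_zero_iff] at h ⊢
  rw [smul_comm _ c, smul_comm _ c]
  constructor <;> gcongr
  exacts [h.1, h.2]

theorem measure_le_one_sub_add [IsProbabilityMeasure μ] [IsProbabilityMeasure P] {a : ℝ≥0∞}
    (hP : a • P ≤ μ) (F : Set Ω) : μ F ≤ 1 - a + a * P F := by
  have := isFiniteMeasure_of_le μ hP
  calc μ F = (μ - a • P) F + a * P F := by
        conv_lhs => rw [← Measure.sub_add_cancel_of_le hP]
        rfl
    _ ≤ (μ - a • P) .univ + a * P F := by gcongr; exact F.subset_univ
    _ = 1 - a + a * P F := by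
        rw [Measure.sub_apply .univ hP, Measure.smul_apply, measure_univ, measure_univ,
          smul_eq_mul, mul_one]

theorem measure_le_mul_add_of_smul_le [IsProbabilityMeasure μ] [IsProbabilityMeasure P]
    {a k d : ℝ≥0∞} (hP : a • P ≤ μ) (hQ : a • Q ≤ ν) {F : Set Ω} (h : P F ≤ k * Q F + d) :
    μ F ≤ k * ν F + (1 - a + d) := by
  have ha : a ≤ 1 := by simpa using hP .univ
  calc μ F ≤ 1 - a + a * P F := measure_le_one_sub_add hP F
    _ ≤ 1 - a + a * (k * Q F + d) := by gcongr
    _ = k * (a • Q) F + (1 - a + a * d) := by rw [Measure.smul_apply, smul_eq_mul]; ring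
    _ ≤ k * ν F + (1 - a + 1 * d) := by gcongr
    _ = k * ν F + (1 - a + d) := by rw [one_mul]

theorem ApproxIndist.one_sub_le_inf_univ [IsProbabilityMeasure μ] [IsFiniteMeasure ν] (hδ : 0 ≤ δ)
    (h : ApproxIndist ε δ μ ν) :
    ENNReal.ofReal (1 - δ) ≤ (μ ⊓ ENNReal.ofReal (Real.exp ε) • ν) .univ := by
  have := ν.smul_finite (ENNReal.ofReal_ne_top (r := Real.exp ε))
  rw [ENNReal.ofReal_sub _ hδ, ENNReal.ofReal_one, tsub_le_iff_right, ← measure_univ (μ := μ)]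
  exact measure_univ_le_inf_add fun F hF => (h F hF).1

variable [IsProbabilityMeasure μ] [IsProbabilityMeasure ν]

theorem ApproxIndist.of_one_le (hδ : 1 ≤ δ) : ApproxIndist ε δ μ ν := by
  have hle : ∀ (ρ : Measure Ω) [IsProbabilityMeasure ρ] (F : Set Ω), ρ F ≤ ENNReal.ofReal δ :=
    fun _ _ _ => prob_le_one.trans (ENNReal.one_le_ofReal.2 hδ)
  exact fun F _ => ⟨(hle μ F).trans le_add_self, (hle ν F).trans le_add_self⟩

theorem ApproxIndist.of_smul_le [IsProbabilityMeasure P] [IsProbabilityMeasure Q] (hη : 0 ≤ η)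
    (hδ : 0 ≤ δ) (hP : ENNReal.ofReal (1 - η) • P ≤ μ) (hQ : ENNReal.ofReal (1 - η) • Q ≤ ν)
    (h : ApproxIndist ε δ P Q) : ApproxIndist ε (η + δ) μ ν := by
  have ha : 1 - ENNReal.ofReal (1 - η) + ENNReal.ofReal δ ≤ ENNReal.ofReal (η + δ) := by
    rw [ENNReal.ofReal_add hη hδ]
    gcongr
    rw [tsub_le_iff_right, ← ENNReal.ofReal_one]
    simpa only [add_sub_cancel] using ENNReal.ofReal_add_le (p := η) (q := 1 - η)
  exact fun F hF => ⟨(measure_le_mul_add_of_smul_le hP hQ (h F hF).1).trans (by gcongr),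
    (measure_le_mul_add_of_smul_le hQ hP (h F hF).2).trans (by gcongr)⟩

-- Any two measures between `μ ⊓ ν` and `e^ε • (μ ⊓ ν)` are `(ε, 0)`-indistinguishable, which leaves
-- room to equalize the masses of the two chosen here.
theorem ApproxIndist.exists_le_pure (hε : 0 ≤ ε) (hδ : 0 ≤ δ) (h : ApproxIndist ε δ μ ν) :
    ∃ u v, u ≤ μ ∧ v ≤ ν ∧ u .univ = v .univ ∧ ENNReal.ofReal (1 - δ) ≤ u .univ ∧
      ApproxIndist ε 0 u v := by
  set k := ENNReal.ofReal (Real.exp ε)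
  have hk : 1 ≤ k := ENNReal.one_le_ofReal.2 (Real.one_le_exp hε)
  have hμν : μ ⊓ k • ν ≤ k • (μ ⊓ ν) := inf_smul_le_smul_inf hk ENNReal.ofReal_ne_top
  have hνμ : ν ⊓ k • μ ≤ k • (μ ⊓ ν) :=
    (inf_smul_le_smul_inf hk ENNReal.ofReal_ne_top).trans_eq (by rw [inf_comm])
  have hle : ∀ ρ : Measure Ω, ρ ≤ k • ρ := fun ρ => by
    conv_lhs => rw [← one_smul ℝ≥0∞ ρ]
    gcongr
  have hinfμ : μ ⊓ ν ≤ μ ⊓ k • ν := inf_le_inf_left μ (hle ν)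
  have hinfν : μ ⊓ ν ≤ ν ⊓ k • μ := le_inf inf_le_right (inf_le_left.trans (hle μ))
  have := isFiniteMeasure_of_le μ (inf_le_left : μ ⊓ k • ν ≤ μ)
  have := isFiniteMeasure_of_le ν (inf_le_left : ν ⊓ k • μ ≤ ν)
  obtain ⟨u, hru, hup, hu⟩ := exists_measure_between hinfμ (le_max_left _ (ENNReal.ofReal (1 - δ)))
    (max_le (hinfμ _) (h.one_sub_le_inf_univ hδ))
  obtain ⟨v, hrv, hvq, hv⟩ := exists_measure_between hinfν (le_max_left _ (ENNReal.ofReal (1 - δ)))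
    (max_le (hinfν _) (h.symm.one_sub_le_inf_univ hδ))
  refine ⟨u, v, hup.trans inf_le_left, hvq.trans inf_le_left, hu.trans hv.symm,
    hu ▸ le_max_right _ _, approxIndist_zero_iff.2 ⟨?_, ?_⟩⟩
  · exact hup.trans (hμν.trans (by gcongr))
  · exact hvq.trans (hνμ.trans (by gcongr))

theorem ApproxIndist.exists_smul_le_pure (hε : 0 ≤ ε) (hδ : 0 ≤ δ) (hδ1 : δ < 1)
    (h : ApproxIndist ε δ μ ν) :
    ∃ P Q, IsProbabilityMeasure P ∧ IsProbabilityMeasure Q ∧ ENNReal.ofReal (1 - δ) • P ≤ μ ∧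
      ENNReal.ofReal (1 - δ) • Q ≤ ν ∧ ApproxIndist ε 0 P Q := by
  obtain ⟨u, v, hu, hv, huv, hmass, hpure⟩ := h.exists_le_pure hε hδ
  have := isFiniteMeasure_of_le μ hu
  have := isFiniteMeasure_of_le ν hv
  have hu0 : 0 < u .univ := (ENNReal.ofReal_pos.2 (sub_pos.2 hδ1)).trans_le hmass
  have : NeZero u := ⟨fun h0 => hu0.ne' (Measure.measure_univ_eq_zero.2 h0)⟩
  have : NeZero v := ⟨fun h0 => (huv ▸ hu0).ne' (Measure.measure_univ_eq_zero.2 h0)⟩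
  refine ⟨(u .univ)⁻¹ • u, (v .univ)⁻¹ • v, inferInstance, inferInstance,
    (smul_inv_measure_univ_smul_le hmass).trans hu,
    (smul_inv_measure_univ_smul_le (hmass.trans_eq huv)).trans hv, ?_⟩
  rw [← huv]
  exact hpure.smul_of_pure _

end Decomposition

theorem advanced_composition_general {ι : Type*} [Fintype ι] {Ω : ι → Type*}
    [∀ i, MeasurableSpace (Ω i)] (μ ν : ∀ i, Measure (Ω i)) [∀ i, IsProbabilityMeasure (μ i)]
    [∀ i, IsProbabilityMeasure (ν i)] (ε δ : ι → ℝ) (δ' : ℝ) (hε : ∀ i, 0 ≤ ε i)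
    (hδ : ∀ i, 0 ≤ δ i) (hδ' : 0 < δ') (h : ∀ i, ApproxIndist (ε i) (δ i) (μ i) (ν i)) :
    ApproxIndist (√(2 * (∑ i, ε i ^ 2) * Real.log (1 / δ')) + ∑ i, ε i * (Real.exp (ε i) - 1))
      (∑ i, δ i + δ') (Measure.pi μ) (Measure.pi ν) := by
  have hsum : 0 ≤ ∑ i, δ i := Finset.sum_nonneg fun i _ => hδ i
  rcases le_or_gt 1 (∑ i, δ i) with h1 | h1
  · exact .of_one_le (h1.trans (le_add_of_nonneg_right hδ'.le))
  have hδ1 : ∀ i, δ i < 1 := fun i =>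
    (Finset.single_le_sum (fun j _ => hδ j) (Finset.mem_univ i)).trans_lt h1
  choose P Q hP hQ hPμ hQν hPQ using fun i => (h i).exists_smul_le_pure (hε i) (hδ i) (hδ1 i)
  exact .of_smul_le hsum hδ'.le
    (ofReal_one_sub_sum_smul_measure_pi_le hδ (fun i => (hδ1 i).le) hPμ)
    (ofReal_one_sub_sum_smul_measure_pi_le hδ (fun i => (hδ1 i).le) hQν) (.pi_of_pure hPQ hδ')

/-- Advanced composition for product measures: if `μ_ℓ ≈_{(ε,δ)} ν_ℓ` for each of
`m` coordinates, then the product measures are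
`(√(2m·ln(1/δ'))·ε + m·ε·(e^ε − 1), mδ + δ')`-indistinguishable. -/
theorem advanced_composition {m : ℕ} (hm : 0 < m) {Ω : Fin m → Type*}
    [∀ ℓ, MeasurableSpace (Ω ℓ)]
    (μ ν : ∀ ℓ, Measure (Ω ℓ))
    [∀ ℓ, IsProbabilityMeasure (μ ℓ)] [∀ ℓ, IsProbabilityMeasure (ν ℓ)]
    (ε δ δ' : ℝ) (hε : 0 < ε) (hδ : 0 ≤ δ) (hδ' : 0 < δ')
    (h : ∀ ℓ, ApproxIndist ε δ (μ ℓ) (ν ℓ)) :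
    ApproxIndist (Real.sqrt (2 * m * Real.log (1 / δ')) * ε + m * ε * (Real.exp ε - 1))
      (m * δ + δ') (Measure.pi μ) (Measure.pi ν) := by
  have hsqrt : √(2 * m * ε ^ 2 * Real.log (1 / δ')) = √(2 * m * Real.log (1 / δ')) * ε := by
    rw [mul_right_comm, Real.sqrt_mul' _ (sq_nonneg ε), Real.sqrt_sq hε.le]
  simpa only [Finset.sum_const, Finset.card_univ, Fintype.card_fin, nsmul_eq_mul, hsqrt,
    ← mul_assoc] using advanced_composition_general μ ν (fun _ => ε) (fun _ => δ) δ'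
    (fun _ => hε.le) (fun _ => hδ) hδ' h
end
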